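/- The kernel of the K-algebra homomorphism ε : P → W equals T; consequently ε induces an injective K-algebra homomorphism from the free metabelian associative algebra F = P/T into W. -/

import Mathlib

open MvPolynomial

namespace Stmt4

/-- Index type for `{1, …, 2d}`: the pair `(i, 0)` stands for the index `2i-1` and
`(i, 1)` for the index `2i`. -/
abbrev ι (d : ℕ) : Type := Fin d × Fin 2

/-- The free unital associative algebra `P = K⟨x_1, …, x_{2d}⟩`. -/
abbrev P (K : Type) [Field K] (d : ℕ) : Type := FreeAlgebra K (ι d)

/-- The relation whose `RingQuot` is the free metabelian associative algebra
`F = P/T`. -/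
def metaRel (K : Type) [Field K] (d : ℕ) : P K d → P K d → Prop := fun p q =>
  q = 0 ∧ ∃ a b c e : P K d, p = (a * b - b * a) * (c * e - e * c)

/-- The free metabelian associative algebra `F = P/T` of rank `2d`. -/
abbrev F (K : Type) [Field K] (d : ℕ) : Type := RingQuot (metaRel K d)

/-- The two-sided ideal `T = P'·P' ⊆ P` generated by all products of two commutators. -/
noncomputable def T (K : Type) [Field K] (d : ℕ) : TwoSidedIdeal (P K d) :=
  TwoSidedIdeal.span {p : P K d |
    ∃ a b c e : P K d, p = (a * b - b * a) * (c * e - e * c)}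

/-- The polynomial ring `R = K[y_1, …, y_{2d}]`. -/
abbrev R (K : Type) [Field K] (d : ℕ) : Type := MvPolynomial (ι d) K

/-- The polynomial ring `S = K[u_1, …, u_{2d}, v'_1, …, v'_{2d}]`; the variable
`X (Sum.inl j)` is `u_j` and `X (Sum.inr j)` is `v'_j`. -/
abbrev S (K : Type) [Field K] (d : ℕ) : Type := MvPolynomial (ι d ⊕ ι d) K

/-- The free `S`-module `M` with basis `a_1, …, a_{2d}`. -/
abbrev M (K : Type) [Field K] (d : ℕ) : Type := ι d → S K d

variable (K : Type) [Field K] (d : ℕ)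

/-- The basis element `a_j` of `M`. -/
noncomputable def a (j : ι d) : M K d := Pi.single j 1

/-- `y_j ↦ u_j`. -/
noncomputable def lam : R K d →ₐ[K] S K d :=
  MvPolynomial.rename (Sum.inl : ι d → ι d ⊕ ι d)

/-- `y_j ↦ v'_j`. -/
noncomputable def rho : R K d →ₐ[K] S K d :=
  MvPolynomial.rename (Sum.inr : ι d → ι d ⊕ ι d)

/-- The left `R`-action on `M`: `y_j` acts as scalar multiplication by `u_j`. -/
noncomputable instance : Module (R K d) (M K d) :=
  Module.compHom _ (lam K d).toRingHom

/-- The right `R`-action on `M`: `y_j` acts as scalar multiplication by `v'_j`. -/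
noncomputable instance : Module (R K d)ᵐᵒᵖ (M K d) :=
  Module.compHom _ (RingHom.fromOpposite (rho K d).toRingHom fun _ _ => mul_comm _ _)

instance : SMulCommClass (R K d) (R K d)ᵐᵒᵖ (M K d) := by
  constructor
  intro r r' m
  show lam K d r • (rho K d r'.unop • m) = rho K d r'.unop • (lam K d r • m)
  rw [smul_smul, smul_smul, mul_comm]

instance : IsScalarTower K (R K d) (M K d) := by
  constructor
  intro c r m
  show lam K d (c • r) • m = c • (lam K d r • m)
  rw [map_smul]
  exact smul_assoc c (lam K d r) m

instance : IsScalarTower K (R K d)ᵐᵒᵖ (M K d) := by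
  constructor
  intro c r m
  show rho K d (c • r).unop • m = c • (rho K d r.unop • m)
  rw [MulOpposite.unop_smul, map_smul]
  exact smul_assoc c (rho K d r.unop) m

/-- The wreath product `W = R ⋉ M`, the trivial square-zero extension of `R` by the
`R`-bimodule `M`. -/
noncomputable abbrev W : Type := TrivSqZeroExt (R K d) (M K d)

/-- The unique `K`-algebra homomorphism `ε : P → W` with `ε(x_j) = (y_j, a_j)`. -/
noncomputable def ε : P K d →ₐ[K] W K d :=
  FreeAlgebra.lift K fun j =>
    TrivSqZeroExt.inl (MvPolynomial.X j) + TrivSqZeroExt.inr (a K d j)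

/-- The commutator ideal of `P`. -/
noncomputable def CI : TwoSidedIdeal (P K d) :=
  TwoSidedIdeal.span {p : P K d | ∃ a b : P K d, p = a * b - b * a}

/-- The projection `P → R`. -/
noncomputable def ppi : P K d →ₐ[K] R K d := FreeAlgebra.lift K MvPolynomial.X

lemma mem_CI (p : P K d) (hp : ppi K d p = 0) : p ∈ CI K d := by
  letI : CommRing (CI K d).ringCon.Quotient :=
    { (inferInstance : Ring (CI K d).ringCon.Quotient) with
      mul_comm := by
        intro x y
        induction x using Quotient.inductionOn' with | _ x => ?_
        induction y using Quotient.inductionOn' with | _ y => ?_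
        refine Quotient.sound' ?_
        refine ((CI K d).rel_iff _ _).2 ?_
        exact TwoSidedIdeal.subset_span ⟨x, y, rfl⟩ }
  let m : P K d →+* (CI K d).ringCon.Quotient := (CI K d).ringCon.mk'
  let e : R K d →+* (CI K d).ringCon.Quotient :=
    eval₂Hom (m.comp (algebraMap K (P K d))) (fun j => m (FreeAlgebra.ι K j))
  have h : ∀ p, m p = e (ppi K d p) := by
    intro p
    induction p using FreeAlgebra.induction with
    | grade0 c => simp [e, ppi, MvPolynomial.algebraMap_eq]
    | grade1 j => simp [e, ppi]
    | mul x y hx hy => rw [map_mul, map_mul, map_mul, hx, hy]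
    | add x y hx hy => rw [map_add, map_add, map_add, hx, hy]
  have h0 : m p = 0 := by rw [h, hp, map_zero]
  rw [← TwoSidedIdeal.ker_ringCon_mk' (CI K d), TwoSidedIdeal.mem_ker]
  exact h0

lemma mul_mem_T (p q : P K d) (hp : p ∈ CI K d) (hq : q ∈ CI K d) : p * q ∈ T K d := by
  rw [CI, TwoSidedIdeal.mem_span_iff_mem_addSubgroup_closure] at hp hq
  induction hp using AddSubgroup.closure_induction with
  | zero => rw [zero_mul]; exact (T K d).zero_mem
  | add x y _ _ hx hy => rw [add_mul]; exact (T K d).add_mem hx hy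
  | neg x _ hx => rw [neg_mul]; exact (T K d).neg_mem hx
  | mem x hx =>
    induction hq using AddSubgroup.closure_induction with
    | zero => rw [mul_zero]; exact (T K d).zero_mem
    | add x y _ _ hx hy => rw [mul_add]; exact (T K d).add_mem hx hy
    | neg x _ hx => rw [mul_neg]; exact (T K d).neg_mem hx
    | mem y hy =>
      obtain ⟨_, ⟨r, -, _, ⟨a, b, rfl⟩, rfl⟩, s, -, rfl⟩ := hx
      obtain ⟨_, ⟨r', -, _, ⟨c, e, rfl⟩, rfl⟩, s', -, rfl⟩ := hy
      have key : ∀ z : P K d, (a * b - b * a) * (z * (c * e - e * c)) ∈ T K d := by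
        intro z
        have h1 : (a * b - b * a) * ((z * c) * e - e * (z * c)) ∈ T K d :=
          TwoSidedIdeal.subset_span ⟨a, b, z * c, e, rfl⟩
        have h2 : (a * b - b * a) * (z * e - e * z) ∈ T K d :=
          TwoSidedIdeal.subset_span ⟨a, b, z, e, rfl⟩
        have h3 := (T K d).sub_mem h1 ((T K d).mul_mem_right _ c h2)
        convert h3 using 1
        noncomm_ring
      have := (T K d).mul_mem_left r _ ((T K d).mul_mem_right _ s' (key (s * r')))
      convert this using 1
      noncomm_ring

lemma ppi_surj : Function.Surjective (ppi K d) := by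
  intro f
  induction f using MvPolynomial.induction_on with
  | C c => exact ⟨algebraMap K _ c, by simp [MvPolynomial.algebraMap_eq]⟩
  | add p q hp hq =>
    obtain ⟨x, rfl⟩ := hp
    obtain ⟨y, rfl⟩ := hq
    exact ⟨x + y, map_add _ _ _⟩
  | mul_X p j hp =>
    obtain ⟨x, rfl⟩ := hp
    exact ⟨x * FreeAlgebra.ι K j, by simp [ppi]⟩

lemma exists_bilin (B : R K d →ₗ[K] R K d →ₗ[K] P K d) :
    ∃ θ : S K d →ₗ[K] P K d, ∀ f g, θ (lam K d f * rho K d g) = B f g := by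
  refine ⟨(MvPolynomial.basisMonomials (ι d ⊕ ι d) K).constr K fun s =>
    B (monomial (s.comapDomain Sum.inl Sum.inl_injective.injOn) 1)
      (monomial (s.comapDomain Sum.inr Sum.inr_injective.injOn) 1), ?_⟩
  intro f g
  induction f using MvPolynomial.induction_on' with
  | add p q hp hq => simp only [map_add, add_mul, hp, hq, LinearMap.add_apply]
  | monomial α x =>
    induction g using MvPolynomial.induction_on' with
    | add p q hp hq => simp only [map_add, mul_add, hp, hq]
    | monomial β y =>
      have hx : (monomial α x : R K d) = x • monomial α 1 := by simp [smul_monomial]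
      have hy : (monomial β y : R K d) = y • monomial β 1 := by simp [smul_monomial]
      rw [hx, hy]
      simp only [map_smul, LinearMap.smul_apply, smul_mul_assoc, mul_smul_comm]
      congr 2
      rw [lam, rho, rename_monomial, rename_monomial, monomial_mul, one_mul,
        ← congrFun (MvPolynomial.coe_basisMonomials (ι d ⊕ ι d) K), Module.Basis.constr_basis]
      have h1 : (Finsupp.mapDomain Sum.inl α + Finsupp.mapDomain Sum.inr β :
          (ι d ⊕ ι d) →₀ ℕ).comapDomain Sum.inl Sum.inl_injective.injOn = α := by
        ext i
        simp [Finsupp.comapDomain_apply, Finsupp.mapDomain_apply Sum.inl_injective,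
          Finsupp.mapDomain_notin_range]
      have h2 : (Finsupp.mapDomain Sum.inl α + Finsupp.mapDomain Sum.inr β :
          (ι d ⊕ ι d) →₀ ℕ).comapDomain Sum.inr Sum.inr_injective.injOn = β := by
        ext i
        simp [Finsupp.comapDomain_apply, Finsupp.mapDomain_apply Sum.inr_injective,
          Finsupp.mapDomain_notin_range]
      rw [h1, h2]

lemma fst_ε (p : P K d) : (ε K d p).fst = ppi K d p := by
  induction p using FreeAlgebra.induction with
  | grade0 c => simp only [AlgHom.commutes]; rfl
  | grade1 j => simp [ε, ppi]
  | mul x y hx hy => rw [map_mul, map_mul, TrivSqZeroExt.fst_mul, hx, hy]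
  | add x y hx hy => rw [map_add, map_add, TrivSqZeroExt.fst_add, hx, hy]

lemma snd_ε_mul (p q : P K d) (j : ι d) : (ε K d (p * q)).snd j =
    lam K d (ppi K d p) * (ε K d q).snd j + rho K d (ppi K d q) * (ε K d p).snd j := by
  rw [map_mul, TrivSqZeroExt.snd_mul, fst_ε, fst_ε]
  rfl

lemma key_mem (p : P K d) (hp : ε K d p = 0) : p ∈ T K d := by
  obtain ⟨σ, hσ⟩ := (ppi K d).toLinearMap.exists_rightInverse_of_surjective
    (LinearMap.range_eq_top.2 (ppi_surj K d))
  have hσ' : ∀ f, ppi K d (σ f) = f := fun f => LinearMap.congr_fun hσ f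
  have hθ : ∀ j : ι d, ∃ θ : S K d →ₗ[K] P K d, ∀ f g, θ (lam K d f * rho K d g) =
      (σ f * FreeAlgebra.ι K j - σ (f * X j)) * σ g := by
    intro j
    let A : R K d →ₗ[K] P K d := (LinearMap.mulRight K (FreeAlgebra.ι K j)).comp σ -
      σ.comp (LinearMap.mulRight K (X j))
    obtain ⟨θ, h⟩ := exists_bilin K d ((LinearMap.mul K (P K d)).compl₁₂ A σ)
    exact ⟨θ, fun f g => by rw [h]; rfl⟩
  choose θ hθ using hθ
  have main : ∀ p : P K d, ∀ f g : R K d,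
      (∑ j, θ j (lam K d f * rho K d g * (ε K d p).snd j)) -
        (σ f * p - σ (f * ppi K d p)) * σ g ∈ T K d := by
    intro p
    induction p using FreeAlgebra.induction with
    | grade0 c =>
      intro f g
      have h1 : (ε K d (algebraMap K _ c)).snd = 0 := by
        rw [AlgHom.commutes]; rfl
      have h2 : f * algebraMap K (R K d) c = c • f := by
        rw [mul_comm, Algebra.smul_def]
      have h3 : σ f * algebraMap K (P K d) c = c • σ f := by
        rw [← Algebra.commutes, Algebra.smul_def]
      rw [h1, AlgHom.commutes, h2, h3, map_smul]
      simp [(T K d).zero_mem]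
    | grade1 i =>
      intro f g
      have h1 : (ε K d (FreeAlgebra.ι K i)).snd = Pi.single i 1 := by
        simp [ε, a]
      have h2 : ppi K d (FreeAlgebra.ι K i) = X i := by simp [ppi]
      rw [h1, h2, Finset.sum_eq_single i]
      · rw [Pi.single_eq_same, mul_one, hθ, sub_self]
        exact (T K d).zero_mem
      · intro j _ hj
        rw [Pi.single_eq_of_ne hj, mul_zero, map_zero]
      · simp
    | add x y hx hy =>
      intro f g
      convert (T K d).add_mem (hx f g) (hy f g) using 1
      simp only [map_add, TrivSqZeroExt.snd_add, Pi.add_apply, mul_add, Finset.sum_add_distrib]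
      noncomm_ring
    | mul x y hx hy =>
      intro f g
      have h1 := hy (f * ppi K d x) g
      have h2 := hx f (g * ppi K d y)
      have h3 : (σ f * x - σ (f * ppi K d x)) * (y * σ g - σ (g * ppi K d y)) ∈ T K d := by
        apply mul_mem_T <;> apply mem_CI
        · simp [hσ']
        · simp [hσ', mul_comm]
      have h4 : (∑ j, θ j (lam K d f * rho K d g * (ε K d (x * y)).snd j)) =
          (∑ j, θ j (lam K d (f * ppi K d x) * rho K d g * (ε K d y).snd j)) +
          (∑ j, θ j (lam K d f * rho K d (g * ppi K d y) * (ε K d x).snd j)) := by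
        rw [← Finset.sum_add_distrib]
        refine Finset.sum_congr rfl fun j _ => ?_
        rw [← map_add, snd_ε_mul, map_mul (lam K d), map_mul (rho K d)]
        congr 1
        ring
      rw [h4, map_mul (ppi K d), ← mul_assoc f]
      convert (T K d).sub_mem ((T K d).add_mem h1 h2) h3 using 1
      noncomm_ring
  have hpi : ppi K d p = 0 := by rw [← fst_ε, hp]; rfl
  have hpC := mem_CI K d p hpi
  have hm := main p 1 1
  rw [hp, hpi] at hm
  have h1 : (1 : P K d) - σ 1 ∈ CI K d := mem_CI K d _ (by simp [hσ'])
  have h2 : σ 1 * p * σ 1 ∈ T K d := by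
    have := (T K d).neg_mem hm
    simpa using this
  have h3 := mul_mem_T K d _ _ h1 hpC
  have h4 := (T K d).mul_mem_left (σ 1) _ (mul_mem_T K d _ _ hpC h1)
  convert (T K d).add_mem (T K d |>.add_mem h3 h4) h2 using 1
  noncomm_ring

lemma comm_fst (p q : P K d) : (ε K d (p * q - q * p)).fst = 0 := by
  rw [fst_ε, map_sub, map_mul, map_mul, mul_comm, sub_self]

lemma ε_prod (a b c e : P K d) : ε K d ((a * b - b * a) * (c * e - e * c)) = 0 := by
  rw [map_mul]
  apply TrivSqZeroExt.ext
  · rw [TrivSqZeroExt.fst_mul, comm_fst, zero_mul]; rfl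
  · rw [TrivSqZeroExt.snd_mul, comm_fst, comm_fst]
    simp

/-- The kernel of `ε : P → W` is exactly `T`; consequently `ε` induces an injective
`K`-algebra homomorphism `F = P/T → W`. -/
theorem stmt4 [CharZero K] (hd : 1 ≤ d) :
    (∀ p : P K d, ε K d p = 0 ↔ p ∈ T K d) ∧
      ∃ ε' : F K d →ₐ[K] W K d,
        Function.Injective ε' ∧
          ε'.comp (RingQuot.mkAlgHom K (metaRel K d)) = ε K d := by
  have h1 : ∀ p : P K d, ε K d p = 0 ↔ p ∈ T K d := by
    intro p
    refine ⟨key_mem K d p, fun hp => ?_⟩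
    have : T K d ≤ TwoSidedIdeal.ker (ε K d) := by
      refine TwoSidedIdeal.span_le.2 ?_
      rintro _ ⟨a, b, c, e, rfl⟩
      exact (TwoSidedIdeal.mem_ker _).2 (ε_prod K d a b c e)
    exact (TwoSidedIdeal.mem_ker _).1 (this hp)
  have hw : ∀ ⦃x y⦄, metaRel K d x y → ε K d x = ε K d y := by
    rintro _ _ ⟨rfl, a, b, c, e, rfl⟩
    rw [ε_prod, map_zero]
  refine ⟨h1, RingQuot.liftAlgHom K ⟨ε K d, hw⟩, ?_, ?_⟩
  · rw [injective_iff_map_eq_zero]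
    intro x hx
    obtain ⟨p, rfl⟩ := RingQuot.mkAlgHom_surjective K _ x
    rw [RingQuot.liftAlgHom_mkAlgHom_apply] at hx
    have : T K d ≤ TwoSidedIdeal.ker (RingQuot.mkAlgHom K (metaRel K d)) := by
      refine TwoSidedIdeal.span_le.2 ?_
      rintro _ ⟨a, b, c, e, rfl⟩
      refine (TwoSidedIdeal.mem_ker _).2 ?_
      rw [RingQuot.mkAlgHom_rel K (y := 0) ⟨rfl, a, b, c, e, rfl⟩, map_zero]
    exact (TwoSidedIdeal.mem_ker _).1 (this ((h1 p).1 hx))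
  · ext x
    · simp [RingQuot.liftAlgHom_mkAlgHom_apply]
    all_goals simp [RingQuot.liftAlgHom_mkAlgHom_apply]

end Stmt4
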